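/- Let μ ≥ 0 and q ≥ 2. Suppose (x_1, f_1, g_1) and (x_2, f_2, g_2), with x_i, g_i in R^d and f_i in R, satisfy f_i ≥ f_j + ⟨g_j, x_i - x_j⟩ + (μ/q)‖x_i - x_j‖^q for all i, j in {1,2}. Then for every x in R^d there exist f in R and g in R^d such that f ≥ f_i + ⟨g_i, x - x_i⟩ + (μ/q)‖x - x_i‖^q and f_j ≥ f + ⟨g, x_j - x⟩ + (μ/q)‖x - x_j‖^q for all i, j in {1,2}. -/

import Mathlib

open RealInnerProductSpace

theorem aux_pow (α β q : ℝ) (ha : 0 < α) (hb : 0 < β) (hq : 2 ≤ q) :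
    β * α ^ q + α * β ^ q + (α + β) * α ^ q ≤ α * (α + β) ^ q := by
  have key : ∀ t : ℝ, 0 < t → t ^ q = t ^ (q - 2) * t ^ 2 := by
    intro t ht
    rw [← Real.rpow_natCast t 2, ← Real.rpow_add ht]
    norm_num
  have h1 : α ^ (q - 2) ≤ (α + β) ^ (q - 2) :=
    Real.rpow_le_rpow ha.le (by linarith) (by linarith)
  have h2 : β ^ (q - 2) ≤ (α + β) ^ (q - 2) :=
    Real.rpow_le_rpow hb.le (by linarith) (by linarith)
  rw [key α ha, key β hb, key (α + β) (by linarith)]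
  have h3 := mul_le_mul_of_nonneg_right h1 (show 0 ≤ (α + 2 * β) * α ^ 2 by positivity)
  have h4 := mul_le_mul_of_nonneg_right h2 (show 0 ≤ α * β ^ 2 by positivity)
  nlinarith

theorem aux_one (c α β q f1 f2 P Q : ℝ) (hc : 0 ≤ c) (ha : 0 < α) (hb : 0 < β) (hq : 2 ≤ q)
    (hPQ : β * P + α * Q = 0) (h : f2 ≥ f1 + (Q - P) + c * (α + β) ^ q) :
    (α + β) * (f1 - P + c * α ^ q) ≤ β * (f1 - c * α ^ q) + α * (f2 - c * β ^ q) := by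
  have h1 := mul_le_mul_of_nonneg_left (aux_pow α β q ha hb hq) hc
  have h2 := mul_le_mul_of_nonneg_left h ha.le
  nlinarith

theorem aux_main {E : Type*} [NormedAddCommGroup E] [InnerProductSpace ℝ E]
    (c q f1 f2 : ℝ) (a b g1 g2 : E) (hc : 0 ≤ c) (hq : 2 ≤ q) (ha : a ≠ 0) (hb : b ≠ 0)
    (h21 : f2 ≥ f1 + ⟪g1, b - a⟫ + c * ‖b - a‖ ^ q)
    (h12 : f1 ≥ f2 + ⟪g2, a - b⟫ + c * ‖a - b‖ ^ q) :
    ∃ (v : ℝ) (g : E), v ≥ f1 - ⟪g1, a⟫ + c * ‖a‖ ^ q ∧ v ≥ f2 - ⟪g2, b⟫ + c * ‖b‖ ^ q ∧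
      f1 ≥ v + ⟪g, a⟫ + c * ‖a‖ ^ q ∧ f2 ≥ v + ⟪g, b⟫ + c * ‖b‖ ^ q := by
  have hα : 0 < ‖a‖ := norm_pos_iff.2 ha
  have hβ : 0 < ‖b‖ := norm_pos_iff.2 hb
  set v := max (f1 - ⟪g1, a⟫ + c * ‖a‖ ^ q) (f2 - ⟪g2, b⟫ + c * ‖b‖ ^ q) with hv
  refine ⟨v, ?_⟩
  suffices hs : ∃ g : E, ⟪g, a⟫ ≤ f1 - v - c * ‖a‖ ^ q ∧ ⟪g, b⟫ ≤ f2 - v - c * ‖b‖ ^ q by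
    obtain ⟨g, h1, h2⟩ := hs
    exact ⟨g, le_max_left _ _, le_max_right _ _, by linarith, by linarith⟩
  by_cases hcol : ‖b‖ • a + ‖a‖ • b = 0
  · have hg : ∀ g : E, ‖b‖ * ⟪g, a⟫ + ‖a‖ * ⟪g, b⟫ = 0 := by
      intro g
      have := congrArg (fun z => ⟪g, z⟫) hcol
      simpa [inner_add_right, inner_smul_right] using this
    have hD : ‖a - b‖ = ‖a‖ + ‖b‖ := by
      have e1 := hg a
      rw [real_inner_self_eq_norm_sq] at e1
      have e2 : ⟪a, b⟫ = -(‖a‖ * ‖b‖) := by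
        apply mul_left_cancel₀ hα.ne'
        linarith
      have e3 := norm_sub_sq_real a b
      rw [e2] at e3
      have : ‖a - b‖ ^ 2 = (‖a‖ + ‖b‖) ^ 2 := by rw [e3]; ring
      exact (pow_left_inj₀ (norm_nonneg _) (by positivity) two_ne_zero).1 this
    rw [norm_sub_rev, hD, inner_sub_right] at h21
    rw [hD, inner_sub_right, add_comm ‖a‖] at h12
    have k1 := aux_one c ‖a‖ ‖b‖ q f1 f2 _ _ hc hα hβ hq (hg g1) h21
    have k2 := aux_one c ‖b‖ ‖a‖ q f2 f1 ⟪g2, b⟫ ⟪g2, a⟫ hc hβ hα hq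
      (by linarith [hg g2]) h12
    have k : (‖a‖ + ‖b‖) * v ≤ ‖b‖ * (f1 - c * ‖a‖ ^ q) + ‖a‖ * (f2 - c * ‖b‖ ^ q) := by
      rcases max_choice (f1 - ⟪g1, a⟫ + c * ‖a‖ ^ q) (f2 - ⟪g2, b⟫ + c * ‖b‖ ^ q) with e | e
      · rw [hv, e]; exact k1
      · rw [hv, e]; linarith
    have hga : ⟪((f1 - v - c * ‖a‖ ^ q) / ‖a‖ ^ 2) • a, a⟫ = f1 - v - c * ‖a‖ ^ q := by
      rw [real_inner_smul_left, real_inner_self_eq_norm_sq]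
      field_simp
    refine ⟨((f1 - v - c * ‖a‖ ^ q) / ‖a‖ ^ 2) • a, hga.le, ?_⟩
    have := hg (((f1 - v - c * ‖a‖ ^ q) / ‖a‖ ^ 2) • a)
    rw [hga] at this
    refine le_of_mul_le_mul_left ?_ hα
    linarith
  · have hpos : 0 < ‖a‖ * ‖b‖ + ⟪a, b⟫ := by
      have h1 : -(‖a‖ * ‖b‖) ≤ ⟪a, b⟫ := (abs_le.1 (abs_real_inner_le_norm a b)).1
      rcases h1.lt_or_eq with h1 | h1
      · linarith
      · exfalso
        apply hcol
        have : ⟪a, -b⟫ = ‖a‖ * ‖-b‖ := by rw [inner_neg_right, norm_neg]; linarith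
        have := inner_eq_norm_mul_iff_real.1 this
        rw [norm_neg] at this
        rw [this]; simp
    set s := ‖a‖ * ‖b‖ + ⟪a, b⟫ with hs
    have ia : ⟪‖b‖ • a + ‖a‖ • b, a⟫ = ‖a‖ * s := by
      rw [inner_add_left, real_inner_smul_left, real_inner_smul_left, real_inner_self_eq_norm_sq,
        real_inner_comm, hs]
      ring
    have ib : ⟪‖b‖ • a + ‖a‖ • b, b⟫ = ‖b‖ * s := by
      rw [inner_add_left, real_inner_smul_left, real_inner_smul_left, real_inner_self_eq_norm_sq, hs]
      ring
    obtain ⟨t, ht1, ht2⟩ : ∃ t : ℝ, -(f1 - v - c * ‖a‖ ^ q) / (‖a‖ * s) ≤ t ∧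
        -(f2 - v - c * ‖b‖ ^ q) / (‖b‖ * s) ≤ t := ⟨_, le_max_left _ _, le_max_right _ _⟩
    rw [div_le_iff₀ (by positivity)] at ht1 ht2
    refine ⟨(-t) • (‖b‖ • a + ‖a‖ • b), ?_, ?_⟩
    · rw [real_inner_smul_left, ia]; linarith
    · rw [real_inner_smul_left, ib]; linarith

theorem stmt5 (d : ℕ) (μ q : ℝ) (hμ : 0 ≤ μ) (hq : 2 ≤ q)
    (x g : Fin 2 → EuclideanSpace ℝ (Fin d)) (f : Fin 2 → ℝ)
    (h : ∀ i j, f i ≥ f j + ⟪g j, x i - x j⟫ + μ / q * ‖x i - x j‖ ^ q) :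
    ∀ x' : EuclideanSpace ℝ (Fin d), ∃ (fv : ℝ) (gv : EuclideanSpace ℝ (Fin d)),
      (∀ i, fv ≥ f i + ⟪g i, x' - x i⟫ + μ / q * ‖x' - x i‖ ^ q) ∧
      (∀ j, f j ≥ fv + ⟪gv, x j - x'⟫ + μ / q * ‖x' - x j‖ ^ q) := by
  intro x'
  by_cases hx : ∃ i, x i = x'
  · obtain ⟨i, rfl⟩ := hx
    refine ⟨f i, g i, fun j => h i j, fun j => ?_⟩
    rw [norm_sub_rev]
    exact h j i
  · have hx' : ∀ i, x i - x' ≠ 0 := fun i e => hx ⟨i, sub_eq_zero.1 e⟩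
    have hc : 0 ≤ μ / q := div_nonneg hμ (by linarith)
    obtain ⟨v, gv, h1, h2, h3, h4⟩ := aux_main (μ / q) q (f 0) (f 1) (x 0 - x') (x 1 - x')
      (g 0) (g 1) hc hq (hx' 0) (hx' 1) (by simpa using h 1 0) (by simpa using h 0 1)
    have e : ∀ i, ⟪g i, x' - x i⟫ = - ⟪g i, x i - x'⟫ := by
      intro i
      rw [← inner_neg_right, neg_sub]
    refine ⟨v, gv, fun i => ?_, fun j => ?_⟩
    · rw [e, norm_sub_rev]
      fin_cases i
      · exact h1
      · exact h2
    · rw [norm_sub_rev]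
      fin_cases j
      · exact h3
      · exact h4
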